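/- Let X be a finite rack with rack rank N. Define C_n^{ND'}(X) (for n ≥ 2) as the subgroup of C_n^R(X) generated by chains of the form Σ_{k=1}^N (x₁,…,x_{i−1}, x_i^{▷k}, x_i^{▷k}, x_{i+2},…,x_n). Then C_*^{ND'}(X) is a subcomplex of C_*^R(X), i.e., ∂_n(C_n^{ND'}(X)) ⊆ C_{n−1}^{ND'}(X). -/

import Mathlib

/-- A rack: a set with operations `act` (x ▷ y) and `inv` (x ▷⁻¹ y) satisfying
(i) (x ▷ y) ▷⁻¹ y = x = (x ▷⁻¹ y) ▷ y and (ii) right self-distributivity. -/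
class Rack' (X : Type*) where
  act : X → X → X
  inv : X → X → X
  act_inv : ∀ x y : X, inv (act x y) y = x
  inv_act : ∀ x y : X, act (inv x y) y = x
  distrib : ∀ x y z : X, act (act x y) z = act (act x z) (act y z)

open Rack'
/-- The kink map π(x) = x ▷ x. -/
def Rack'.kink {X : Type*} [Rack' X] (x : X) : X := Rack'.act x x

/-- Rack powers: x^{▷1} = x ▷ x and x^{▷(k+1)} = x^{▷k} ▷ x^{▷k}
(with x^{▷0} = x as a convenient base case). -/
def Rack'.rpow {X : Type*} [Rack' X] (x : X) : ℕ → X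
  | 0 => x
  | k + 1 => Rack'.act (Rack'.rpow x k) (Rack'.rpow x k)
/-- The i-th face of an (n+1)-tuple: delete the entry at position i. -/
def face {X : Type*} {n : ℕ} (i : Fin (n + 1)) (x : Fin (n + 1) → X) : Fin n → X :=
  fun j => x (i.succAbove j)

/-- The twisted i-th face: delete the entry at position i and act by x_i on all
earlier entries. -/
def tface {X : Type*} [Rack' X] {n : ℕ} (i : Fin (n + 1)) (x : Fin (n + 1) → X) :
    Fin n → X :=
  fun j => if ((i.succAbove j : Fin (n + 1)) : ℕ) < (i : ℕ)
    then Rack'.act (x (i.succAbove j)) (x i) else x (i.succAbove j)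

/-- The rack homology boundary map ∂ : C_{n+1}^R(X) → C_n^R(X), where
C_m^R(X) is the free abelian group on m-tuples of elements of X; on a
generator (x₁,…,x_m) it is Σ_{i=2}^m (−1)^i [(x₁,…,x̂_i,…,x_m) −
(x₁▷x_i,…,x_{i−1}▷x_i,x_{i+1},…,x_m)] (here indices are 0-based, so the
1-based index i corresponds to (i:ℕ)+1). -/
def bdry {X : Type*} [Rack' X] (n : ℕ) :
    FreeAbelianGroup (Fin (n + 1) → X) →+ FreeAbelianGroup (Fin n → X) :=
  FreeAbelianGroup.lift fun x =>
    ∑ i : Fin (n + 1), if (i : ℕ) = 0 then 0 else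
      ((-1 : ℤ) ^ ((i : ℕ) + 1)) •
        (FreeAbelianGroup.of (face i x) - FreeAbelianGroup.of (tface i x))

/-- The subgroup of N-degenerate n-chains: generated by the chains
Σ_{k=1}^N (x₁,…,x_{i−1}, x_i^{▷k}, x_i^{▷k}, x_{i+2},…,x_n),
where x^{▷k} = π^k(x) for the kink map π. -/
def NDsub' (X : Type*) [Rack' X] (N n : ℕ) :
    AddSubgroup (FreeAbelianGroup (Fin n → X)) :=
  AddSubgroup.closure
    { c | ∃ (z : Fin n → X) (i : Fin n) (h : (i : ℕ) + 1 < n),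
        c = ∑ k ∈ Finset.Icc 1 N, FreeAbelianGroup.of
          (fun j => if j = i then (Rack'.kink (X := X))^[k] (z i)
            else if j = ⟨(i : ℕ) + 1, h⟩ then (Rack'.kink (X := X))^[k] (z i)
            else z j) }

/-!
Fix a generator whose entries `π^k(x)` repeat at the adjacent positions `p` and `p + 1`, and sum
over one period of `k`. The (twisted) faces at any other position are again generators, because
right multiplications commute with `π`. The plain faces at `p` and `p + 1` coincide. The twisted
face at `p + 1` differs from the one at `p` only in that the surviving entry `π^k(x)` becomes
`π^k(x) ▷ π^k(x) = π^(k+1)(x)`, since acting by `π^k(x)` is the same as acting by `x`; so these two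
faces agree after summing over a period of `π`. As they carry opposite signs, they cancel.
-/

namespace Rack'

variable {X : Type*} [Rack' X]

theorem act_kink (x y : X) : act x (kink y) = act x y := by
  simpa only [inv_act, kink] using (distrib (inv x y) y y).symm

theorem act_kink_iterate (x y : X) (k : ℕ) : act x (kink^[k] y) = act x y := by
  induction k with
  | zero => rfl
  | succ k ih => rw [Function.iterate_succ_apply', act_kink, ih]

theorem commute_kink_act (y : X) : Function.Commute kink fun x : X => act x y :=
  fun x => (distrib x x y).symm

theorem kink_iterate_act (x y : X) (k : ℕ) : kink^[k] (act x y) = act (kink^[k] x) y :=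
  (commute_kink_act y).iterate_left k x

end Rack'

theorem iterate_eq_id_of_lcm_minimalPeriod_dvd {α : Type*} [Fintype α] {f : α → α} {N : ℕ}
    (h : Finset.univ.lcm (Function.minimalPeriod f) ∣ N) : f^[N] = id :=
  funext fun x => Function.isPeriodicPt_iff_minimalPeriod_dvd.2
    ((Finset.dvd_lcm (Finset.mem_univ x)).trans h)

theorem lt_iff_lt_of_covBy {α : Type*} [LinearOrder α] {a b c : α} (h : a ⋖ b) (hc : c ≠ b) :
    a < c ↔ b < c :=
  ⟨fun hac => (h.ge_of_gt hac).lt_of_ne hc.symm, h.lt.trans⟩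

theorem exists_castSucc_succ_of_covBy {n : ℕ} {p q : Fin (n + 1)} (h : p ⋖ q) :
    ∃ r : Fin n, r.castSucc = p ∧ r.succ = q := by
  have hval : (p : ℕ) + 1 = q := Order.covBy_iff_add_one_eq.1 (Fin.covBy_iff.1 h)
  exact ⟨⟨p, by lia⟩, rfl, Fin.ext hval⟩

section Sums

variable {A : Type*} [AddCommGroup A]

theorem sum_Icc_add_one_eq_sum_Icc {f : ℕ → A} {N : ℕ} (h : f (N + 1) = f 1) :
    ∑ k ∈ Finset.Icc 1 N, f (k + 1) = ∑ k ∈ Finset.Icc 1 N, f k := by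
  rw [← sub_eq_zero, ← Finset.sum_sub_distrib, ← Finset.Ico_add_one_right_eq_Icc,
    Finset.sum_Ico_eq_sum_range]
  simp only [add_comm 1]
  rw [Nat.add_sub_cancel, Finset.sum_range_sub fun k => f (k + 1), h, sub_self]

theorem alternating_sum_mem_of_castSucc_eq_succ {n : ℕ} {f : Fin (n + 1) → A}
    {S : AddSubgroup A} {p : Fin n} (hp : f p.castSucc = f p.succ)
    (hf : ∀ i, i ≠ p.castSucc → i ≠ p.succ → f i ∈ S) :
    ∑ i : Fin (n + 1), (-1 : ℤ) ^ (i : ℕ) • f i ∈ S := by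
  have hmem : p.succ ∈ Finset.univ.erase p.castSucc := by simp [p.castSucc_lt_succ.ne']
  rw [← Finset.add_sum_erase _ _ (Finset.mem_univ p.castSucc), ← Finset.add_sum_erase _ _ hmem,
    ← add_assoc]
  have hcancel :
      (-1 : ℤ) ^ (p.castSucc : ℕ) • f p.castSucc + (-1) ^ (p.succ : ℕ) • f p.succ = 0 := by
    simp [hp, pow_succ]
  rw [hcancel, zero_add]
  refine sum_mem fun i hi => zsmul_mem (hf i ?_ ?_) _
  · exact Finset.ne_of_mem_erase (Finset.mem_of_mem_erase hi)
  · exact Finset.ne_of_mem_erase hi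

end Sums

section Faces

variable {X : Type*} {n : ℕ}

theorem face_update_succAbove (i : Fin (n + 1)) (x : Fin (n + 1) → X) (j : Fin n) (a : X) :
    face i (Function.update x (i.succAbove j) a) = Function.update (face i x) j a :=
  Function.update_comp_eq_of_injective x Fin.succAbove_right_injective j a

theorem face_succ_eq_face_castSucc {x : Fin (n + 1) → X} {p : Fin n}
    (h : x p.castSucc = x p.succ) : face p.succ x = face p.castSucc x := by
  funext j
  rcases lt_trichotomy j p with hj | rfl | hj
  · simp [face, Fin.succAbove_of_castSucc_lt, hj, hj.le]
  · simp [face, h]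
  · simp [face, Fin.succAbove_of_lt_succ, hj, hj.le]

variable [Rack' X]

theorem tface_update_self (i : Fin (n + 1)) (x : Fin (n + 1) → X) (k : ℕ) :
    tface i (Function.update x i (kink^[k] (x i))) = tface i x := by
  funext j
  simp [tface, act_kink_iterate]

theorem tface_update_succAbove (i : Fin (n + 1)) (x : Fin (n + 1) → X) (j : Fin n) (a : X) :
    tface i (Function.update x (i.succAbove j) a) =
      Function.update (tface i x) j (if i.succAbove j < i then act a (x i) else a) := by
  funext l
  rcases eq_or_ne l j with rfl | hl
  · simp [tface]
  · simp [tface, hl]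

theorem tface_succ_eq_update_tface_castSucc {x : Fin (n + 1) → X} {p : Fin n}
    (h : x p.castSucc = x p.succ) :
    tface p.succ x = Function.update (tface p.castSucc x) p (kink (x p.castSucc)) := by
  funext j
  rcases lt_trichotomy j p with hj | rfl | hj
  · simp [tface, Fin.succAbove_of_castSucc_lt, hj, hj.le, hj.ne, h]
  · simp [tface, kink, h]
  · have hj' : ¬(j : ℕ) + 1 < p := by lia
    simp [tface, Fin.succAbove_of_lt_succ, hj, hj.le, hj.ne', hj.not_gt, hj']

theorem face_zero_eq_tface_zero (x : Fin (n + 1) → X) : face 0 x = tface 0 x := by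
  funext j
  simp [face, tface]

theorem bdry_apply (c : FreeAbelianGroup (Fin (n + 1) → X)) :
    bdry n c = ∑ i : Fin (n + 1), (-1 : ℤ) ^ (i : ℕ) •
      (FreeAbelianGroup.map (tface i) c - FreeAbelianGroup.map (face i) c) := by
  suffices h : bdry n = ∑ i : Fin (n + 1), (-1 : ℤ) ^ (i : ℕ) •
      (FreeAbelianGroup.map (tface i) - FreeAbelianGroup.map (face (X := X) i)) by
    simp [h]
  refine FreeAbelianGroup.lift_ext _ _ fun x => ?_
  simp only [bdry, FreeAbelianGroup.lift_apply_of, AddMonoidHom.finsetSum_apply,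
    AddMonoidHom.smul_apply, AddMonoidHom.sub_apply, FreeAbelianGroup.map_of_apply]
  refine Finset.sum_congr rfl fun i _ => ?_
  split_ifs with hi
  · obtain rfl : i = 0 := Fin.ext hi
    simp [face_zero_eq_tface_zero]
  · rw [pow_succ, mul_neg_one, neg_smul, ← smul_neg, neg_sub]

end Faces

section DegenerateChains

variable {X : Type*} [Rack' X] {n : ℕ}

/-- The tuple `(…, π^k(z p), π^k(z p), …)` with equal entries at positions `p` and `q`, agreeing
with `z` elsewhere. The positions need not be adjacent, so that deleting a third one is a statement
about `Fin.succAbove`. -/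
def kinkPair (z : Fin n → X) (p q : Fin n) (k : ℕ) : Fin n → X :=
  Function.update (Function.update z q (kink^[k] (z p))) p (kink^[k] (z p))

/-- The sum of the tuples `kinkPair z p q k` over `1 ≤ k ≤ N`; for `q = p + 1` these are
the generators of `NDsub' X N n`. -/
def degenerateChain (N : ℕ) (z : Fin n → X) (p q : Fin n) : FreeAbelianGroup (Fin n → X) :=
  ∑ k ∈ Finset.Icc 1 N, FreeAbelianGroup.of (kinkPair z p q k)

theorem kinkPair_apply_left (z : Fin n → X) (p q : Fin n) (k : ℕ) :
    kinkPair z p q k p = kink^[k] (z p) := by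
  simp [kinkPair]

theorem kinkPair_apply_left_eq_right (z : Fin n → X) (p q : Fin n) (k : ℕ) :
    kinkPair z p q k p = kinkPair z p q k q := by
  simp [kinkPair, Function.update_apply]

theorem face_kinkPair (i : Fin (n + 1)) (z : Fin (n + 1) → X) (p q : Fin n) (k : ℕ) :
    face i (kinkPair z (i.succAbove p) (i.succAbove q) k) = kinkPair (face i z) p q k := by
  simp only [kinkPair, face_update_succAbove]
  rfl

theorem tface_kinkPair {i : Fin (n + 1)} (z : Fin (n + 1) → X) {p q : Fin n}
    (h : i.succAbove p < i ↔ i.succAbove q < i) (k : ℕ) :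
    tface i (kinkPair z (i.succAbove p) (i.succAbove q) k) = kinkPair (tface i z) p q k := by
  have hp : (if i.succAbove p < i then act (kink^[k] (z (i.succAbove p))) (z i)
      else kink^[k] (z (i.succAbove p))) = kink^[k] (tface i z p) := by
    simp only [tface, apply_ite kink^[k], kink_iterate_act, Fin.lt_def]
  simp only [kinkPair, tface_update_succAbove, Function.update_of_ne (Fin.ne_succAbove i q),
    ← h, hp]

theorem tface_castSucc_kinkPair (z : Fin (n + 1) → X) (p : Fin n) (k : ℕ) :
    tface p.castSucc (kinkPair z p.castSucc p.succ k) =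
      Function.update (tface p.castSucc z) p (kink^[k] (z p.castSucc)) := by
  have h := tface_update_succAbove p.castSucc
    (Function.update z p.castSucc (kink^[k] (z p.castSucc))) p (kink^[k] (z p.castSucc))
  simpa [kinkPair, Function.update_comm p.castSucc_lt_succ.ne', tface_update_self,
    p.castSucc_lt_succ.not_gt] using h

theorem tface_succ_kinkPair (z : Fin (n + 1) → X) (p : Fin n) (k : ℕ) :
    tface p.succ (kinkPair z p.castSucc p.succ k) =
      Function.update (tface p.castSucc z) p (kink^[k + 1] (z p.castSucc)) := by
  rw [tface_succ_eq_update_tface_castSucc (kinkPair_apply_left_eq_right ..), kinkPair_apply_left,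
    tface_castSucc_kinkPair, Function.update_idem, Function.iterate_succ_apply']

theorem map_degenerateChain {Y : Type*} (f : (Fin n → X) → Y) (N : ℕ) (z : Fin n → X)
    (p q : Fin n) :
    FreeAbelianGroup.map f (degenerateChain N z p q) =
      ∑ k ∈ Finset.Icc 1 N, FreeAbelianGroup.of (f (kinkPair z p q k)) := by
  simp only [degenerateChain, map_sum, FreeAbelianGroup.map_of_apply]

theorem map_face_degenerateChain (N : ℕ) (i : Fin (n + 1)) (z : Fin (n + 1) → X) (p q : Fin n) :
    FreeAbelianGroup.map (face i) (degenerateChain N z (i.succAbove p) (i.succAbove q)) =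
      degenerateChain N (face i z) p q := by
  rw [map_degenerateChain]
  simp only [face_kinkPair, degenerateChain]

theorem map_tface_degenerateChain (N : ℕ) {i : Fin (n + 1)} (z : Fin (n + 1) → X) {p q : Fin n}
    (h : i.succAbove p < i ↔ i.succAbove q < i) :
    FreeAbelianGroup.map (tface i) (degenerateChain N z (i.succAbove p) (i.succAbove q)) =
      degenerateChain N (tface i z) p q := by
  rw [map_degenerateChain]
  simp only [tface_kinkPair z h, degenerateChain]

theorem map_face_castSucc_degenerateChain (N : ℕ) (z : Fin (n + 1) → X) (p : Fin n) :
    FreeAbelianGroup.map (face p.castSucc) (degenerateChain N z p.castSucc p.succ) =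
      FreeAbelianGroup.map (face p.succ) (degenerateChain N z p.castSucc p.succ) := by
  simp only [map_degenerateChain, face_succ_eq_face_castSucc (kinkPair_apply_left_eq_right ..)]

theorem map_tface_castSucc_degenerateChain {N : ℕ} {z : Fin (n + 1) → X} {p : Fin n}
    (hN : kink^[N] (z p.castSucc) = z p.castSucc) :
    FreeAbelianGroup.map (tface p.castSucc) (degenerateChain N z p.castSucc p.succ) =
      FreeAbelianGroup.map (tface p.succ) (degenerateChain N z p.castSucc p.succ) := by
  simp only [map_degenerateChain, tface_castSucc_kinkPair, tface_succ_kinkPair]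
  refine (sum_Icc_add_one_eq_sum_Icc (f := fun k => FreeAbelianGroup.of
    (Function.update (tface p.castSucc z) p (kink^[k] (z p.castSucc)))) ?_).symm
  simp only [Function.iterate_succ_apply', hN, Function.iterate_zero_apply]

theorem NDsub'_eq_closure (N : ℕ) :
    NDsub' X N n = AddSubgroup.closure
      {c | ∃ (z : Fin n → X) (p q : Fin n), p ⋖ q ∧ c = degenerateChain N z p q} := by
  have hgen (z : Fin n → X) (p q : Fin n) : degenerateChain N z p q =
      ∑ k ∈ Finset.Icc 1 N, FreeAbelianGroup.of
        (fun j => if j = p then kink^[k] (z p) else if j = q then kink^[k] (z p) else z j) := by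
    refine Finset.sum_congr rfl fun k _ => congrArg FreeAbelianGroup.of (funext fun j => ?_)
    simp only [kinkPair, Function.update_apply]
  rw [NDsub']
  congr 1
  ext c
  constructor
  · rintro ⟨z, i, h, rfl⟩
    exact ⟨z, i, ⟨i + 1, h⟩, Fin.covBy_iff.2 (Order.covBy_add_one _), (hgen ..).symm⟩
  · rintro ⟨z, p, ⟨q, hq⟩, hpq, rfl⟩
    obtain rfl : (p : ℕ) + 1 = q := Order.covBy_iff_add_one_eq.1 (Fin.covBy_iff.1 hpq)
    exact ⟨z, p, hq, hgen ..⟩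

theorem degenerateChain_mem_NDsub' (N : ℕ) (z : Fin n → X) {p q : Fin n} (h : p ⋖ q) :
    degenerateChain N z p q ∈ NDsub' X N n := by
  rw [NDsub'_eq_closure]
  exact AddSubgroup.subset_closure ⟨z, p, q, h, rfl⟩

theorem map_tface_sub_map_face_mem_NDsub' (N : ℕ) (z : Fin (n + 1) → X) {i p q : Fin (n + 1)}
    (hpq : p ⋖ q) (hp : i ≠ p) (hq : i ≠ q) :
    FreeAbelianGroup.map (tface i) (degenerateChain N z p q) -
      FreeAbelianGroup.map (face i) (degenerateChain N z p q) ∈ NDsub' X N n := by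
  have hside : p < i ↔ q < i := lt_iff_lt_of_covBy hpq hq
  obtain ⟨p, rfl⟩ := Fin.exists_succAbove_eq hp.symm
  obtain ⟨q, rfl⟩ := Fin.exists_succAbove_eq hq.symm
  have hpq' : p ⋖ q := hpq.of_image i.succAboveOrderEmb
  rw [map_tface_degenerateChain N z hside, map_face_degenerateChain]
  exact sub_mem (degenerateChain_mem_NDsub' N _ hpq') (degenerateChain_mem_NDsub' N _ hpq')

theorem bdry_degenerateChain_mem_NDsub' {N : ℕ} {z : Fin (n + 1) → X} {p q : Fin (n + 1)}
    (hpq : p ⋖ q) (hN : kink^[N] (z p) = z p) :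
    bdry n (degenerateChain N z p q) ∈ NDsub' X N n := by
  obtain ⟨p, rfl, rfl⟩ := exists_castSucc_succ_of_covBy hpq
  rw [bdry_apply]
  refine alternating_sum_mem_of_castSucc_eq_succ (p := p) ?_ fun i hp hq =>
    map_tface_sub_map_face_mem_NDsub' N z hpq hp hq
  rw [map_tface_castSucc_degenerateChain hN, map_face_castSucc_degenerateChain]

end DegenerateChains

theorem bdry_ndsub'_general {X : Type*} [Rack' X] {N : ℕ} (hN : (kink (X := X))^[N] = id)
    {n : ℕ} {c : FreeAbelianGroup (Fin (n + 1) → X)} (hc : c ∈ NDsub' X N (n + 1)) :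
    bdry n c ∈ NDsub' X N n := by
  suffices h : NDsub' X N (n + 1) ≤ (NDsub' X N n).comap (bdry n) from h hc
  rw [NDsub'_eq_closure, AddSubgroup.closure_le]
  rintro _ ⟨z, p, q, hpq, rfl⟩
  exact bdry_degenerateChain_mem_NDsub' hpq (congrFun hN (z p))

/-- For a finite rack of rack rank N, the alternative degenerate chains
(with repeated entries x_i^{▷k}, x_i^{▷k}) also form a subcomplex. -/
theorem bdry_ndsub' {X : Type*} [Rack' X] [Fintype X] (N : ℕ)
    (hN : Finset.univ.lcm
      (fun x : X => Function.minimalPeriod (Rack'.kink (X := X)) x) = N)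
    (n : ℕ) (c : FreeAbelianGroup (Fin (n + 1) → X)) (hc : c ∈ NDsub' X N (n + 1)) :
    bdry n c ∈ NDsub' X N n :=
  bdry_ndsub'_general (iterate_eq_id_of_lcm_minimalPeriod_dvd hN.dvd) hc
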